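/- arXiv:1307.4709 — 3 statements merged into one kernel-verified Lean document; each statement's English description precedes it below -/
import Mathlib

section
/- Non-conforming majorant for the solenoidal part: let ṽ ∈ L²(Ω;ℝ^N), set E := ∇û − A^{−1}ṽ, and let E = g + A^{−1}ψ with g ∈ 𝒢, ψ ∈ D₀ be its Helmholtz decomposition. Then for every u ∈ L²₋₁(Ω) with weak gradient ∇u ∈ L²(Ω;ℝ^N) such that û − u ∈ H¹°₋₁(Ω), ‖A^{−1}ψ‖_A ≤ M̃₊(A^{−1}ṽ,∇u) := ‖∇u − A^{−1}ṽ‖_A. -/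
open MeasureTheory Filter Topology
open scoped RealInnerProductSpace

noncomputable section

/-- Euclidean space `ℝ^N`. -/
abbrev Euc (N : ℕ) := EuclideanSpace ℝ (Fin N)

/-- The Poincaré constant `c_N = 2/(N-2)`. -/
def cN (N : ℕ) : ℝ := 2 / ((N : ℝ) - 2)

variable {N : ℕ}

/-- Squared weighted `L²_s(Ω)` norm: `∫_Ω (1+|x|²)^s u(x)² dx`. -/
def sqL2 (Ω : Set (Euc N)) (s : ℝ) (u : Euc N → ℝ) : ℝ :=
  ∫ x in Ω, (1 + ‖x‖ ^ 2) ^ s * u x ^ 2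

/-- Weighted `L²_s(Ω)` norm. -/
def nrmL2 (Ω : Set (Euc N)) (s : ℝ) (u : Euc N → ℝ) : ℝ :=
  Real.sqrt (sqL2 Ω s u)

/-- Membership in the weighted space `L²_s(Ω)` (scalar functions). -/
def MemL2 (Ω : Set (Euc N)) (s : ℝ) (u : Euc N → ℝ) : Prop :=
  AEStronglyMeasurable u (volume.restrict Ω) ∧
    Integrable (fun x => (1 + ‖x‖ ^ 2) ^ s * u x ^ 2) (volume.restrict Ω)

/-- Squared weighted `L²_s(Ω;ℝ^N)` norm for vector fields. -/
def sqL2V (Ω : Set (Euc N)) (s : ℝ) (v : Euc N → Euc N) : ℝ :=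
  ∫ x in Ω, (1 + ‖x‖ ^ 2) ^ s * ‖v x‖ ^ 2

/-- Weighted `L²_s(Ω;ℝ^N)` norm for vector fields. -/
def nrmL2V (Ω : Set (Euc N)) (s : ℝ) (v : Euc N → Euc N) : ℝ :=
  Real.sqrt (sqL2V Ω s v)

/-- Membership in the weighted space `L²_s(Ω;ℝ^N)` (vector fields). -/
def MemL2V (Ω : Set (Euc N)) (s : ℝ) (v : Euc N → Euc N) : Prop :=
  AEStronglyMeasurable v (volume.restrict Ω) ∧
    Integrable (fun x => (1 + ‖x‖ ^ 2) ^ s * ‖v x‖ ^ 2) (volume.restrict Ω)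

/-- Test functions: `φ ∈ C_c^∞(Ω)`. -/
def IsTest (Ω : Set (Euc N)) (φ : Euc N → ℝ) : Prop :=
  ContDiff ℝ (⊤ : ℕ∞) φ ∧ HasCompactSupport φ ∧ tsupport φ ⊆ Ω

/-- `g` is the weak gradient of `u` on `Ω`:
`∫_Ω u ∇φ = −∫_Ω φ g` for all test functions `φ`. -/
def IsWeakGrad (Ω : Set (Euc N)) (u : Euc N → ℝ) (g : Euc N → Euc N) : Prop :=
  ∀ φ : Euc N → ℝ, IsTest Ω φ →
    (∫ x in Ω, u x • gradient φ x) = - ∫ x in Ω, φ x • g x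

/-- `d` is the weak divergence of the vector field `v` on `Ω`:
`∫_Ω v·∇φ = −∫_Ω d φ` for all test functions `φ`. -/
def IsWeakDiv (Ω : Set (Euc N)) (v : Euc N → Euc N) (d : Euc N → ℝ) : Prop :=
  ∀ φ : Euc N → ℝ, IsTest Ω φ →
    (∫ x in Ω, ⟪v x, gradient φ x⟫) = - ∫ x in Ω, d x * φ x

/-- `u ∈ H¹°₋₁(Ω)` with weak gradient `g`: `u ∈ L²₋₁(Ω)`, `g ∈ L²(Ω;ℝ^N)` is the weak
gradient of `u`, and `u` is approximated by test functions in the natural norms. -/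
def MemH10 (Ω : Set (Euc N)) (u : Euc N → ℝ) (g : Euc N → Euc N) : Prop :=
  MemL2 Ω (-1) u ∧ MemL2V Ω 0 g ∧ IsWeakGrad Ω u g ∧
    ∃ φ : ℕ → Euc N → ℝ, (∀ n, IsTest Ω (φ n)) ∧
      Tendsto (fun n => nrmL2 Ω (-1) (fun x => u x - φ n x)) atTop (𝓝 0) ∧
      Tendsto (fun n => nrmL2V Ω 0 (fun x => g x - gradient (φ n) x)) atTop (𝓝 0)

/-- `g ∈ 𝒢`, the closure in `L²(Ω;ℝ^N)` of `{∇φ : φ ∈ C_c^∞(Ω)}`. -/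
def MemG (Ω : Set (Euc N)) (g : Euc N → Euc N) : Prop :=
  MemL2V Ω 0 g ∧
    ∃ φ : ℕ → Euc N → ℝ, (∀ n, IsTest Ω (φ n)) ∧
      Tendsto (fun n => nrmL2V Ω 0 (fun x => g x - gradient (φ n) x)) atTop (𝓝 0)

/-- `ψ ∈ D₀`, the set of weakly divergence-free fields in `L²(Ω;ℝ^N)`. -/
def MemD0 (Ω : Set (Euc N)) (ψ : Euc N → Euc N) : Prop :=
  MemL2V Ω 0 ψ ∧
    ∀ φ : Euc N → ℝ, IsTest Ω φ → (∫ x in Ω, ⟪ψ x, gradient φ x⟫) = 0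

/-- The coefficient matrix field `A : Ω → ℝ^{N×N}`: measurable, essentially bounded,
symmetric, and uniformly coercive (`A(x)ξ·ξ ≥ α⁻²|ξ|²` for a.e. `x ∈ Ω`). -/
structure Coeff (N : ℕ) (Ω : Set (Euc N)) where
  A : Euc N → Euc N →L[ℝ] Euc N
  α : ℝ
  α_pos : 0 < α
  meas : ∀ ξ : Euc N, AEStronglyMeasurable (fun x => A x ξ) (volume.restrict Ω)
  bdd : ∃ C : ℝ, ∀ᵐ x ∂(volume.restrict Ω), ∀ ξ : Euc N, ‖A x ξ‖ ≤ C * ‖ξ‖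
  symm : ∀ x : Euc N, ∀ ξ η : Euc N, ⟪A x ξ, η⟫ = ⟪ξ, A x η⟫
  coer : ∀ᵐ x ∂(volume.restrict Ω), ∀ ξ : Euc N, α⁻¹ ^ 2 * ‖ξ‖ ^ 2 ≤ ⟪A x ξ, ξ⟫

/-- The weighted inner product `⟨v,w⟩_A = ∫_Ω A v · w dx`. -/
def ipA (Ω : Set (Euc N)) (A : Euc N → Euc N →L[ℝ] Euc N) (v w : Euc N → Euc N) : ℝ :=
  ∫ x in Ω, ⟪A x (v x), w x⟫

/-- The squared `A`-weighted norm `‖v‖²_A = ∫_Ω A v · v dx`. -/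
def sqA (Ω : Set (Euc N)) (A : Euc N → Euc N →L[ℝ] Euc N) (v : Euc N → Euc N) : ℝ :=
  ipA Ω A v v

/-- The `A`-weighted norm `‖v‖_A`. -/
def nrmA (Ω : Set (Euc N)) (A : Euc N → Euc N →L[ℝ] Euc N) (v : Euc N → Euc N) : ℝ :=
  Real.sqrt (sqA Ω A v)

/-- `w = A⁻¹ v` (a.e. on `Ω`), with `w ∈ L²(Ω;ℝ^N)`. -/
def IsAInv (Ω : Set (Euc N)) (A : Euc N → Euc N →L[ℝ] Euc N) (v w : Euc N → Euc N) : Prop :=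
  MemL2V Ω 0 w ∧ ∀ᵐ x ∂(volume.restrict Ω), A x (w x) = v x
lemma memL2V_iff {Ω : Set (Euc N)} {v : Euc N → Euc N} :
    MemL2V Ω 0 v ↔ MemLp v 2 (volume.restrict Ω) := by
  unfold MemL2V
  simp only [Real.rpow_zero, one_mul]
  constructor
  · rintro ⟨h1, h2⟩
    exact (memLp_two_iff_integrable_sq_norm h1).2 h2
  · intro h
    exact ⟨h.1, (memLp_two_iff_integrable_sq_norm h.1).1 h⟩

lemma test_memLp {Ω : Set (Euc N)} {φ : Euc N → ℝ} (h : IsTest Ω φ) :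
    MemLp (gradient φ) 2 (volume.restrict Ω) := by
  have hc : Continuous (gradient φ) := by
    unfold gradient
    exact (LinearIsometryEquiv.continuous _).comp (h.1.continuous_fderiv (by simp))
  have hs : HasCompactSupport (gradient φ) := by
    unfold gradient
    exact (h.2.1.fderiv (𝕜 := ℝ)).comp_left (map_zero _)
  exact (hc.memLp_of_hasCompactSupport hs).restrict Ω

lemma int_inner {Ω : Set (Euc N)} {a b : Euc N → Euc N}
    (ha : MemLp a 2 (volume.restrict Ω)) (hb : MemLp b 2 (volume.restrict Ω)) :
    Integrable (fun x => ⟪a x, b x⟫) (volume.restrict Ω) := by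
  refine Integrable.mono' (ha.norm.integrable_mul hb.norm) (ha.1.inner hb.1) ?_
  filter_upwards with x using norm_inner_le_norm _ _

lemma nrm_cs {Ω : Set (Euc N)} {a b : Euc N → Euc N}
    (ha : MemLp a 2 (volume.restrict Ω)) (hb : MemLp b 2 (volume.restrict Ω)) :
    |∫ x in Ω, ⟪a x, b x⟫| ≤ nrmL2V Ω 0 a * nrmL2V Ω 0 b := by
  have h := integral_mul_norm_le_Lp_mul_Lq (μ := volume.restrict Ω) (f := a) (g := b)
    (p := 2) (q := 2) Real.HolderConjugate.two_two (by simpa using ha) (by simpa using hb)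
  have h1 : |∫ x in Ω, ⟪a x, b x⟫| ≤ ∫ x in Ω, ‖a x‖ * ‖b x‖ := by
    refine norm_integral_le_of_norm_le (f := fun x => ⟪a x, b x⟫) ?_ ?_
    · exact hb.norm.integrable_mul ha.norm |>.congr (by
        filter_upwards with x
        simp [mul_comm])
    · filter_upwards with x using norm_inner_le_norm _ _
  refine h1.trans (h.trans (le_of_eq ?_))
  simp [nrmL2V, sqL2V, Real.sqrt_eq_rpow]

lemma orth {Ω : Set (Euc N)} {g ψ : Euc N → Euc N} (hg : MemLp g 2 (volume.restrict Ω))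
    (hψ : MemD0 Ω ψ) (φ : ℕ → Euc N → ℝ) (hφ : ∀ n, IsTest Ω (φ n))
    (hl : Tendsto (fun n => nrmL2V Ω 0 (fun x => g x - gradient (φ n) x)) atTop (𝓝 0)) :
    ∫ x in Ω, ⟪ψ x, g x⟫ = 0 := by
  have hp := memL2V_iff.1 hψ.1
  have key : ∀ n, |∫ x in Ω, ⟪ψ x, g x⟫| ≤
      nrmL2V Ω 0 ψ * nrmL2V Ω 0 (fun x => g x - gradient (φ n) x) := by
    intro n
    have ht := test_memLp (hφ n)
    refine le_trans (le_of_eq ?_) (nrm_cs hp (hg.sub ht))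
    congr 1
    have : ∫ x in Ω, ⟪ψ x, g x - gradient (φ n) x⟫ =
        (∫ x in Ω, ⟪ψ x, g x⟫) - ∫ x in Ω, ⟪ψ x, gradient (φ n) x⟫ := by
      simp only [inner_sub_right]
      exact integral_sub (int_inner hp hg) (int_inner hp ht)
    rw [this, hψ.2 _ (hφ n), sub_zero]
  have h0 := ge_of_tendsto' (hl.const_mul (nrmL2V Ω 0 ψ)) key
  rw [mul_zero] at h0
  exact abs_nonpos_iff.1 h0

lemma coeff_memLp {Ω : Set (Euc N)} (M : Coeff N Ω) {v : Euc N → Euc N}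
    (hv : MemLp v 2 (volume.restrict Ω)) :
    MemLp (fun x => M.A x (v x)) 2 (volume.restrict Ω) := by
  obtain ⟨C, hC⟩ := M.bdd
  have hm : AEStronglyMeasurable (fun x => M.A x (v x)) (volume.restrict Ω) := by
    have : (fun x => M.A x (v x)) = fun x => ∑ i, (v x i) •
        M.A x (EuclideanSpace.basisFun (Fin N) ℝ i) := by
      funext x
      conv_lhs => rw [← (EuclideanSpace.basisFun (Fin N) ℝ).sum_repr (v x)]
      simp only [map_sum, map_smul, EuclideanSpace.basisFun_repr]
    rw [this]
    refine Finset.aestronglyMeasurable_fun_sum _ fun i _ => ?_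
    refine AEStronglyMeasurable.smul (𝕜 := ℝ) ?_ (M.meas _)
    exact (EuclideanSpace.proj (𝕜 := ℝ) i).continuous.comp_aestronglyMeasurable hv.1
  refine hv.of_le_mul (c := C) hm ?_
  filter_upwards [hC] with x hx using hx _

/-- Non-conforming majorant for the solenoidal part: `‖A⁻¹ψ‖_A ≤ ‖∇u − A⁻¹ṽ‖_A`
for all `u` with `û − u ∈ H¹°₋₁(Ω)`; here `A⁻¹ψ = E − g` a.e. -/
theorem stmt_11 (Ω : Set (Euc N)) (hΩ : IsOpen Ω) (hN : 3 ≤ N) (M : Coeff N Ω)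
    (f : Euc N → ℝ) (hf : MemL2 Ω 1 f)
    (uh : Euc N → ℝ) (gu : Euc N → Euc N)
    (huh : MemL2 Ω (-1) uh) (hgu : MemL2V Ω 0 gu) (hguw : IsWeakGrad Ω uh gu)
    (hweak : ∀ φ : Euc N → ℝ, IsTest Ω φ →
      (∫ x in Ω, ⟪M.A x (gu x), gradient φ x⟫) = ∫ x in Ω, f x * φ x)
    (vt : Euc N → Euc N) (hvt : MemL2V Ω 0 vt)
    (wt : Euc N → Euc N) (hwt : IsAInv Ω M.A vt wt)
    (g ψ : Euc N → Euc N) (hg : MemG Ω g) (hψ : MemD0 Ω ψ)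
    (hdec : ∀ᵐ x ∂(volume.restrict Ω), M.A x ((gu x - wt x) - g x) = ψ x) :
    ∀ (u : Euc N → ℝ) (gu' : Euc N → Euc N),
      MemL2 Ω (-1) u → MemL2V Ω 0 gu' → IsWeakGrad Ω u gu' →
      MemH10 Ω (fun x => uh x - u x) (fun x => gu x - gu' x) →
      nrmA Ω M.A (fun x => (gu x - wt x) - g x) ≤
        nrmA Ω M.A (fun x => gu' x - wt x) := by
  intro u gu' hu hgu' _ hH
  obtain ⟨hg2, φ, hφ, hφl⟩ := hg
  obtain ⟨-, hd2, -, χ, hχ, -, hχl⟩ := hH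
  have Lg := memL2V_iff.1 hg2
  have Ld := memL2V_iff.1 hd2
  have Lgu := memL2V_iff.1 hgu
  have Lgu' := memL2V_iff.1 hgu'
  have Lwt := memL2V_iff.1 hwt.1
  have Lψ := memL2V_iff.1 hψ.1
  have o1 := orth Lg hψ φ hφ hφl
  have o2 := orth Ld hψ χ hχ hχl
  have Lh : MemLp (fun x => (gu x - wt x) - g x) 2 (volume.restrict Ω) := (Lgu.sub Lwt).sub Lg
  have Lp' : MemLp (fun x => gu' x - wt x) 2 (volume.restrict Ω) := Lgu'.sub Lwt
  have i1 : Integrable (fun x => ⟪M.A x ((gu x - wt x) - g x), (gu x - wt x) - g x⟫)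
    (volume.restrict Ω) := int_inner (coeff_memLp M Lh) Lh
  have i2 : Integrable (fun x => ⟪M.A x (gu' x - wt x), gu' x - wt x⟫)
    (volume.restrict Ω) := int_inner (coeff_memLp M Lp') Lp'
  have j1 : Integrable (fun x => ⟪ψ x, g x⟫) (volume.restrict Ω) := int_inner Lψ Lg
  have j3 : ∀ a b : Euc N → ℝ, Integrable a (volume.restrict Ω) → Integrable b (volume.restrict Ω) →
      Integrable (fun x => 2 * (a x - b x)) (volume.restrict Ω) := fun a b ha hb =>
    (ha.sub hb).const_mul 2
  have j2 : Integrable (fun x => ⟪ψ x, gu x - gu' x⟫) (volume.restrict Ω) :=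
    int_inner Lψ Ld
  unfold nrmA sqA ipA
  apply Real.sqrt_le_sqrt
  have e : ∫ x in Ω, (⟪M.A x ((gu x - wt x) - g x), (gu x - wt x) - g x⟫
      + 2 * (⟪ψ x, g x⟫ - ⟪ψ x, gu x - gu' x⟫)) =
      ∫ x in Ω, ⟪M.A x ((gu x - wt x) - g x), (gu x - wt x) - g x⟫ := by
    rw [integral_add i1 (j3 _ _ j1 j2), integral_const_mul, integral_sub j1 j2, o1, o2]
    simp
  rw [← e]
  refine integral_mono_ae (i1.add (j3 _ _ j1 j2)) i2 ?_
  filter_upwards [hdec, M.coer] with x hx hc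
  have hp : gu' x - wt x = ((gu x - wt x) - g x) + (g x - (gu x - gu' x)) := by abel
  have h0 : 0 ≤ ⟪M.A x (g x - (gu x - gu' x)), g x - (gu x - gu' x)⟫ :=
    le_trans (by positivity) (hc _)
  have h1 := M.symm x (g x - (gu x - gu' x)) ((gu x - wt x) - g x)
  rw [← inner_sub_right, hp, map_add, inner_add_left, inner_add_right, inner_add_right, h1, hx,
    real_inner_comm (ψ x) (g x - (gu x - gu' x))]
  linarith
end
end

section
/- Combined non-conforming upper bound (Theorem 3.1, upper part): let ṽ ∈ L²(Ω;ℝ^N) and E := ∇û − A^{−1}ṽ. Then for every v ∈ L²(Ω;ℝ^N) possessing a weak divergence div v ∈ L²₊₁(Ω) and every u ∈ L²₋₁(Ω) with weak gradient ∇u ∈ L²(Ω;ℝ^N) such that û − u ∈ H¹°₋₁(Ω), ‖E‖²_A ≤ (c_{N,α}‖f + div v‖_{L²₊₁(Ω)} + ‖A^{−1}(ṽ − v)‖_A)² + ‖∇u − A^{−1}ṽ‖²_A. -/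
open MeasureTheory Filter Topology
open scoped RealInnerProductSpace

noncomputable section

variable {N : ℕ}

section helpers

lemma real_cs {a b c : ℝ} (hb : 0 ≤ b) (ha : 0 ≤ a)
    (h : ∀ t : ℝ, 0 < t → 2 * c ≤ t * a + t⁻¹ * b) : c ≤ √a * √b := by
  by_cases hc : c ≤ 0
  · exact hc.trans (by positivity)
  push Not at hc
  have h2 : ∀ t : ℝ, 0 ≤ a * (t * t) + (-2 * c) * t + b := by
    intro t
    by_cases ht : 0 < t
    · have := mul_le_mul_of_nonneg_left (h t ht) ht.le
      have e : t * (t * a + t⁻¹ * b) = a * (t * t) + b := by field_simp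
      rw [e] at this
      linarith
    · push Not at ht
      nlinarith [mul_self_nonneg t, mul_nonneg ha (mul_self_nonneg t), mul_nonneg hc.le (neg_nonneg.2 ht)]
  have h3 := discrim_le_zero h2
  rw [discrim] at h3
  rw [← Real.sqrt_mul ha]
  apply Real.le_sqrt_of_sq_le
  nlinarith

lemma int_cs {X : Type*} [MeasurableSpace X] {μ : Measure X} {P Q h : X → ℝ}
    (hP : Integrable P μ) (hQ : Integrable Q μ) (hP0 : ∀ᵐ x ∂μ, 0 ≤ P x) (hQ0 : ∀ᵐ x ∂μ, 0 ≤ Q x)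
    (hh : ∀ᵐ x ∂μ, h x ^ 2 ≤ P x * Q x) :
    ∫ x, h x ∂μ ≤ √(∫ x, P x ∂μ) * √(∫ x, Q x ∂μ) := by
  by_cases hi : Integrable h μ
  swap
  · rw [integral_undef hi]; positivity
  refine real_cs (integral_nonneg_of_ae hQ0) (integral_nonneg_of_ae hP0) ?_
  intro t ht
  rw [← integral_const_mul, ← integral_const_mul, ← integral_const_mul,
    ← integral_add (hP.const_mul t) (hQ.const_mul t⁻¹)]
  apply integral_mono_ae (hi.const_mul 2) ((hP.const_mul t).add (hQ.const_mul t⁻¹))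
  filter_upwards [hP0, hQ0, hh] with x h1 h2 h3
  have ht' : 0 < t⁻¹ := inv_pos.2 ht
  have e : t * t⁻¹ = 1 := mul_inv_cancel₀ ht.ne'
  simp only [Pi.add_apply]
  apply le_of_sq_le_sq _ (by positivity)
  have e2 : (t * P x) * (t⁻¹ * Q x) = P x * Q x := by
    rw [mul_mul_mul_comm, e, one_mul]
  nlinarith [sq_nonneg (t * P x - t⁻¹ * Q x)]

lemma partial_eq (φ : Euc N → ℝ) (x : Euc N) (i : Fin N) :
    fderiv ℝ φ x (EuclideanSpace.single i 1) = gradient φ x i := by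
  rw [gradient, ← InnerProductSpace.toDual_symm_apply, EuclideanSpace.inner_single_right]
  simp

lemma grad_cont {Ω : Set (Euc N)} {φ : Euc N → ℝ} (h : IsTest Ω φ) : Continuous (gradient φ) := by
  have : Continuous (fderiv ℝ φ) := h.1.continuous_fderiv (by simp)
  exact (InnerProductSpace.toDual ℝ (Euc N)).symm.continuous.comp this

lemma grad_zero {φ : Euc N → ℝ} (x : Euc N) (hx : x ∉ tsupport φ) :
    gradient φ x = 0 := by
  have : fderiv ℝ φ x = 0 := by
    have := support_fderiv_subset ℝ (f := φ)
    by_contra hc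
    exact hx (this hc)
  rw [gradient, this, map_zero]

lemma grad_supp {Ω : Set (Euc N)} {φ : Euc N → ℝ} (h : IsTest Ω φ) : HasCompactSupport (gradient φ) :=
  HasCompactSupport.intro h.2.1 (grad_zero)

lemma hardy {Ω : Set (Euc N)} {φ : Euc N → ℝ} (hN : 3 ≤ N) (h : IsTest Ω φ) :
    ∫ x, (1 + ‖x‖ ^ 2)⁻¹ * φ x ^ 2 ≤ cN N ^ 2 * ∫ x, ‖gradient φ x‖ ^ 2 := by
  have hc := h.1.continuous
  have hg := grad_cont h
  have hpos : ∀ x : Euc N, 0 < 1 + ‖x‖ ^ 2 := fun x => by positivity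
  have hne : ∀ x : Euc N, 1 + ‖x‖ ^ 2 ≠ 0 := fun x => (hpos x).ne'
  have hN' : (3 : ℝ) ≤ N := by exact_mod_cast hN
  have cs : ∀ F : Euc N → ℝ, Continuous F → (∀ x, φ x = 0 → F x = 0) → Integrable F := by
    intro F hF h0
    exact hF.integrable_of_hasCompactSupport
      (HasCompactSupport.intro h.2.1 fun x hx => h0 x (image_eq_zero_of_notMem_tsupport hx))
  have csg : Integrable (fun x => ‖gradient φ x‖ ^ 2) :=
    (hg.norm.pow 2).integrable_of_hasCompactSupport
      (HasCompactSupport.intro h.2.1 fun x hx => by simp [grad_zero x hx])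
  have hwc : Continuous (fun x : Euc N => (1 + ‖x‖ ^ 2)⁻¹) :=
    Continuous.inv₀ (by fun_prop) hne
  have dX : ∀ (i : Fin N) (x : Euc N), HasFDerivAt (fun x : Euc N => x i * (1 + ‖x‖ ^ 2)⁻¹)
      (x i • (-((1 + ‖x‖ ^ 2) ^ 2)⁻¹ • (2 • innerSL ℝ x)) + (1 + ‖x‖ ^ 2)⁻¹ •
        (EuclideanSpace.proj i : Euc N →L[ℝ] ℝ)) x := by
    intro i x
    have h1 : HasFDerivAt (fun x : Euc N => x i) (EuclideanSpace.proj i : Euc N →L[ℝ] ℝ) x :=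
      (EuclideanSpace.proj i : Euc N →L[ℝ] ℝ).hasFDerivAt
    have h2 : HasFDerivAt (fun x : Euc N => 1 + ‖x‖ ^ 2) (2 • innerSL ℝ x) x :=
      (hasStrictFDerivAt_norm_sq x).hasFDerivAt.const_add 1
    have h3 := (hasDerivAt_inv (hne x)).comp_hasFDerivAt x h2
    exact h1.mul h3
  have ibp : ∀ i : Fin N, ∫ x, φ x ^ 2 * ((1 + ‖x‖ ^ 2)⁻¹ - 2 * x i ^ 2 * ((1 + ‖x‖ ^ 2) ^ 2)⁻¹)
      = - ∫ x, (2 * φ x * gradient φ x i) * (x i * (1 + ‖x‖ ^ 2)⁻¹) := by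
    intro i
    have dφ : ∀ x, HasFDerivAt (fun x => φ x ^ 2) ((2 * φ x) • fderiv ℝ φ x) x := by
      intro x
      have := ((h.1.differentiable (by simp)) x).hasFDerivAt.pow 2
      have e : (2 • φ x ^ (2 - 1)) = 2 * φ x := by simp
      rw [e] at this
      exact this
    have := integral_bilinear_hasFDerivAt_right_eq_neg_left_of_integrable
      (μ := (volume : Measure (Euc N))) (B := ContinuousLinearMap.mul ℝ ℝ)
      (v := EuclideanSpace.single i 1) (f := fun x => φ x ^ 2)
      (f' := fun x => (2 * φ x) • fderiv ℝ φ x)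
      (g := fun x : Euc N => x i * (1 + ‖x‖ ^ 2)⁻¹) (g' := _)
      ?_ ?_ ?_ (fun x _ => dφ x) (fun x _ => dX i x)
    · simp only [ContinuousLinearMap.mul_apply', smul_apply, partial_eq,
        add_apply, smul_eq_mul, innerSL_apply_apply, nsmul_eq_mul] at this
      rw [← this]
      congr 1
      ext x
      simp [EuclideanSpace.inner_single_right]
      ring_nf
      tauto
    · simp only [ContinuousLinearMap.mul_apply', smul_apply, partial_eq,
        smul_eq_mul]
      apply cs
      · fun_prop
      · intro x hx; simp [hx]
    · simp only [ContinuousLinearMap.mul_apply']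
      apply cs
      · refine (hc.pow 2).mul ?_
        have : Continuous (fun x : Euc N => ((1 + ‖x‖ ^ 2)^2)⁻¹) :=
          Continuous.inv₀ (by fun_prop) (fun x => pow_ne_zero 2 (hne x))
        simp
        fun_prop
      · intro x hx; simp [hx]
    · simp only [ContinuousLinearMap.mul_apply']
      apply cs
      · fun_prop
      · intro x hx; simp [hx]
  have hw2 : Continuous (fun x : Euc N => ((1 + ‖x‖ ^ 2)^2)⁻¹) :=
    Continuous.inv₀ (by fun_prop) (fun x => pow_ne_zero 2 (hne x))
  have main : ∫ x, ∑ i, φ x ^ 2 * ((1 + ‖x‖ ^ 2)⁻¹ - 2 * x i ^ 2 * ((1 + ‖x‖ ^ 2) ^ 2)⁻¹)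
      = ∫ x, ∑ i, -((2 * φ x * gradient φ x i) * (x i * (1 + ‖x‖ ^ 2)⁻¹)) := by
    rw [integral_finsetSum, integral_finsetSum]
    · refine Finset.sum_congr rfl fun i _ => ?_
      rw [ibp i, integral_neg]
    · intro i _
      apply cs
      · fun_prop
      · intro x hx; simp [hx]
    · intro i _
      apply cs
      · fun_prop
      · intro x hx; simp [hx]
  set c : ℝ := ((N : ℝ) - 2) / 2 with hcdef
  have hcpos : 0 < c := by rw [hcdef]; linarith
  have iS : Integrable (fun x => (1 + ‖x‖ ^ 2)⁻¹ * φ x ^ 2) := by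
    apply cs
    · fun_prop
    · intro x hx; simp [hx]
  have l1 : (2 * c) * ∫ x, (1 + ‖x‖ ^ 2)⁻¹ * φ x ^ 2 ≤
      ∫ x, ∑ i, φ x ^ 2 * ((1 + ‖x‖ ^ 2)⁻¹ - 2 * x i ^ 2 * ((1 + ‖x‖ ^ 2) ^ 2)⁻¹) := by
    rw [← integral_const_mul]
    apply integral_mono (iS.const_mul _)
    · apply cs
      · fun_prop
      · intro x hx; simp [hx]
    intro x
    simp only
    rw [← Finset.mul_sum, Finset.sum_sub_distrib, ← Finset.sum_mul, ← Finset.mul_sum]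
    have e : ∑ i, x i ^ 2 = ‖x‖ ^ 2 := by
      rw [EuclideanSpace.norm_sq_eq]; simp
    rw [e]
    simp only [Finset.sum_const, Finset.card_univ, Fintype.card_fin, nsmul_eq_mul]
    have e3 : ‖x‖ ^ 2 * ((1 + ‖x‖ ^ 2) ^ 2)⁻¹ ≤ (1 + ‖x‖ ^ 2)⁻¹ := by
      rw [← div_eq_mul_inv, ← one_div, div_le_div_iff₀ (by positivity) (by positivity)]
      nlinarith [sq_nonneg ‖x‖, hpos x]
    have := mul_le_mul_of_nonneg_left e3 (sq_nonneg (φ x))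
    rw [hcdef]
    nlinarith
  have l2 : ∫ x, ∑ i, -((2 * φ x * gradient φ x i) * (x i * (1 + ‖x‖ ^ 2)⁻¹)) ≤
      c * (∫ x, (1 + ‖x‖ ^ 2)⁻¹ * φ x ^ 2) + c⁻¹ * ∫ x, ‖gradient φ x‖ ^ 2 := by
    rw [← integral_const_mul, ← integral_const_mul,
      ← integral_add (iS.const_mul c) (csg.const_mul c⁻¹)]
    apply integral_mono
    · apply cs
      · fun_prop
      · intro x hx; simp [hx]
    · exact (iS.const_mul c).add (csg.const_mul c⁻¹)
    intro x
    simp only [Pi.add_apply]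
    have e : ∑ i, -((2 * φ x * gradient φ x i) * (x i * (1 + ‖x‖ ^ 2)⁻¹)) =
        - 2 * φ x * (1 + ‖x‖ ^ 2)⁻¹ * ⟪gradient φ x, x⟫ := by
      rw [PiLp.inner_apply, Finset.mul_sum]
      refine Finset.sum_congr rfl fun i _ => ?_
      simp; ring
    rw [e]
    have k1 : |⟪gradient φ x, x⟫| ≤ ‖gradient φ x‖ * ‖x‖ := abs_real_inner_le_norm _ _
    set W := (1 + ‖x‖ ^ 2)⁻¹ with hW
    have hW0 : 0 < W := inv_pos.2 (hpos x)
    have hW1 : W * ‖x‖ ^ 2 ≤ 1 := by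
      rw [hW, inv_mul_le_iff₀ (hpos x)]; linarith
    have k2 : -2 * φ x * W * ⟪gradient φ x, x⟫ ≤ 2 * (|φ x| * W * (‖gradient φ x‖ * ‖x‖)) := by
      have : -2 * φ x * W * ⟪gradient φ x, x⟫ ≤ |-2 * φ x * W * ⟪gradient φ x, x⟫| := le_abs_self _
      rw [abs_mul, abs_mul, abs_mul, abs_of_pos hW0] at this
      rw [show |(-2 : ℝ)| = 2 by norm_num] at this
      have t := mul_le_mul_of_nonneg_left k1 (by positivity : 0 ≤ 2 * |φ x| * W)
      linarith
    refine k2.trans ?_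
    apply le_of_sq_le_sq _ (by positivity)
    have e5 : c * c⁻¹ = 1 := mul_inv_cancel₀ hcpos.ne'
    have k3 : (2 * (|φ x| * W * (‖gradient φ x‖ * ‖x‖))) ^ 2 ≤ 4 * ((c * (W * φ x ^ 2)) * (c⁻¹ * ‖gradient φ x‖ ^ 2)) := by
      have : (2 * (|φ x| * W * (‖gradient φ x‖ * ‖x‖))) ^ 2 = 4 * (φ x ^ 2 * W * ‖gradient φ x‖ ^ 2) * (W * ‖x‖^2) := by
        rw [← sq_abs (φ x)]; ring
      rw [this]
      have e6 : 4 * ((c * (W * φ x ^ 2)) * (c⁻¹ * ‖gradient φ x‖ ^ 2)) = 4 * (φ x ^ 2 * W * ‖gradient φ x‖ ^ 2) := by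
        linear_combination (4 * W * φ x ^ 2 * ‖gradient φ x‖ ^ 2) * e5
      rw [e6]
      exact mul_le_of_le_one_right (by positivity) hW1
    nlinarith [sq_nonneg (c * (W * φ x ^ 2) - c⁻¹ * ‖gradient φ x‖ ^ 2)]
  have hcN : cN N = c⁻¹ := by rw [cN, hcdef, inv_div]
  rw [hcN]
  have l3 : c * ∫ x, (1 + ‖x‖ ^ 2)⁻¹ * φ x ^ 2 ≤ c⁻¹ * ∫ x, ‖gradient φ x‖ ^ 2 := by linarith
  have := mul_le_mul_of_nonneg_left l3 (inv_pos.2 hcpos).le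
  rw [← mul_assoc, inv_mul_cancel₀ hcpos.ne', one_mul] at this
  rw [pow_two, mul_assoc]; exact this

lemma memV_iff {Ω : Set (Euc N)} {v : Euc N → Euc N} : MemL2V Ω 0 v ↔
    AEStronglyMeasurable v (volume.restrict Ω) ∧
      Integrable (fun x => ‖v x‖ ^ 2) (volume.restrict Ω) := by
  simp [MemL2V]

lemma memV_sub {Ω : Set (Euc N)} {v w : Euc N → Euc N} (hv : MemL2V Ω 0 v) (hw : MemL2V Ω 0 w) :
    MemL2V Ω 0 (fun x => v x - w x) := by
  rw [memV_iff] at *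
  have hm := hv.1.sub hw.1
  refine ⟨hm, ((hv.2.const_mul 2).add (hw.2.const_mul 2)).mono' (hm.norm.pow 2) ?_⟩
  refine Eventually.of_forall fun x => ?_
  simp only [Pi.add_apply, Pi.sub_apply, Pi.pow_apply]
  rw [Real.norm_of_nonneg (by positivity)]
  have := norm_sub_le (v x) (w x)
  nlinarith [norm_nonneg (v x - w x), sq_nonneg (‖v x‖ - ‖w x‖), norm_nonneg (v x), norm_nonneg (w x)]

lemma memV_grad {Ω : Set (Euc N)} {φ : Euc N → ℝ} (h : IsTest Ω φ) : MemL2V Ω 0 (gradient φ) := by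
  rw [memV_iff]
  refine ⟨(grad_cont h).aestronglyMeasurable, Integrable.integrableOn ?_⟩
  exact ((grad_cont h).norm.pow 2).integrable_of_hasCompactSupport
      (HasCompactSupport.intro h.2.1 fun x hx => by simp [grad_zero x hx])

lemma mem_test {Ω : Set (Euc N)} {φ : Euc N → ℝ} (h : IsTest Ω φ) : MemL2 Ω (-1) φ := by
  refine ⟨h.1.continuous.aestronglyMeasurable, Integrable.integrableOn ?_⟩
  have hc := h.1.continuous
  have hwc : Continuous (fun x : Euc N => (1 + ‖x‖ ^ 2)⁻¹) :=
    Continuous.inv₀ (by fun_prop) (fun x => by positivity)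
  have : Continuous (fun x : Euc N => (1 + ‖x‖ ^ 2) ^ (-1 : ℝ) * φ x ^ 2) := by
    simp only [Real.rpow_neg_one]; fun_prop
  exact this.integrable_of_hasCompactSupport
      (HasCompactSupport.intro h.2.1 fun x hx => by
        simp [image_eq_zero_of_notMem_tsupport hx])

lemma mem_add {Ω : Set (Euc N)} {f g : Euc N → ℝ} (hf : MemL2 Ω 1 f) (hg : MemL2 Ω 1 g) :
    MemL2 Ω 1 (fun x => f x + g x) := by
  have hm := hf.1.add hg.1
  refine ⟨hm, ((hf.2.const_mul 2).add (hg.2.const_mul 2)).mono' ?_ ?_⟩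
  · refine AEStronglyMeasurable.mul ?_ (hm.pow 2)
    simp only [Real.rpow_one]
    exact Continuous.aestronglyMeasurable (by fun_prop)
  refine Eventually.of_forall fun x => ?_
  simp only [Pi.add_apply, Real.rpow_one]
  rw [Real.norm_of_nonneg (by positivity)]
  have : (0 : ℝ) ≤ 1 + ‖x‖ ^ 2 := by positivity
  nlinarith [mul_nonneg this (sq_nonneg (f x - g x))]

lemma wt_mul (x : Euc N) (a b : ℝ) :
    (a * b) ^ 2 = ((1 + ‖x‖ ^ 2) ^ (1 : ℝ) * a ^ 2) * ((1 + ‖x‖ ^ 2) ^ (-1 : ℝ) * b ^ 2) := by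
  have : (1 + ‖x‖ ^ 2) ≠ 0 := by positivity
  rw [Real.rpow_one, Real.rpow_neg_one]
  field_simp

lemma prod_int {Ω : Set (Euc N)} {f g : Euc N → ℝ} (hf : MemL2 Ω 1 f) (hg : MemL2 Ω (-1) g) :
    Integrable (fun x => f x * g x) (volume.restrict Ω) := by
  refine (hf.2.add hg.2).mono' (hf.1.mul hg.1) (Eventually.of_forall fun x => ?_)
  have e := wt_mul x (f x) (g x)
  have p1 : 0 ≤ (1 + ‖x‖ ^ 2) ^ (1 : ℝ) * f x ^ 2 := by positivity
  have p2 : 0 ≤ (1 + ‖x‖ ^ 2) ^ (-1 : ℝ) * g x ^ 2 := by positivity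
  simp only [Pi.add_apply]
  rw [Real.norm_eq_abs]
  apply abs_le_of_sq_le_sq _ (by positivity)
  rw [e]
  nlinarith [mul_nonneg p1 p2, sq_nonneg ((1 + ‖x‖ ^ 2) ^ (1 : ℝ) * f x ^ 2), sq_nonneg ((1 + ‖x‖ ^ 2) ^ (-1 : ℝ) * g x ^ 2)]

lemma prod_cs {Ω : Set (Euc N)} {f g : Euc N → ℝ} (hf : MemL2 Ω 1 f) (hg : MemL2 Ω (-1) g) :
    ∫ x in Ω, f x * g x ≤ nrmL2 Ω 1 f * nrmL2 Ω (-1) g :=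
  int_cs hf.2 hg.2 (Eventually.of_forall fun x => by positivity)
    (Eventually.of_forall fun x => by positivity)
    (Eventually.of_forall fun x => (wt_mul x _ _).le)

lemma A_meas {Ω : Set (Euc N)} (M : Coeff N Ω) {v : Euc N → Euc N}
    (hv : AEStronglyMeasurable v (volume.restrict Ω)) :
    AEStronglyMeasurable (fun x => M.A x (v x)) (volume.restrict Ω) := by
  have e : (fun x => M.A x (v x)) =
      fun x => ∑ i, v x i • M.A x (EuclideanSpace.single i 1) := by
    ext1 x
    have : v x = ∑ i, v x i • (EuclideanSpace.single i (1 : ℝ) : Euc N) := by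
      ext j
      simp [Finset.sum_apply, Pi.single_apply]
    conv_lhs => rw [this]
    rw [map_sum]
    simp only [map_smul]
  rw [e]
  refine Finset.aestronglyMeasurable_fun_sum _ fun i _ => ?_
  have hvi : AEStronglyMeasurable (fun x => v x i) (volume.restrict Ω) :=
    (EuclideanSpace.proj i : Euc N →L[ℝ] ℝ).continuous.comp_aestronglyMeasurable hv
  exact hvi.smul (M.meas _)

lemma A_bdd {Ω : Set (Euc N)} (M : Coeff N Ω) : ∃ C : ℝ, 0 ≤ C ∧
    ∀ᵐ x ∂(volume.restrict Ω), ∀ ξ η : Euc N, |⟪M.A x ξ, η⟫| ≤ C * (‖ξ‖ * ‖η‖) := by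
  obtain ⟨C, hC⟩ := M.bdd
  refine ⟨|C|, abs_nonneg _, ?_⟩
  filter_upwards [hC] with x hx ξ η
  calc |⟪M.A x ξ, η⟫| ≤ ‖M.A x ξ‖ * ‖η‖ := abs_real_inner_le_norm _ _
    _ ≤ (|C| * ‖ξ‖) * ‖η‖ := by
      gcongr
      exact (hx ξ).trans (by gcongr; exact le_abs_self C)
    _ = _ := by ring

lemma ipA_int {Ω : Set (Euc N)} (M : Coeff N Ω) {v w : Euc N → Euc N}
    (hv : MemL2V Ω 0 v) (hw : MemL2V Ω 0 w) :
    Integrable (fun x => ⟪M.A x (v x), w x⟫) (volume.restrict Ω) := by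
  rw [memV_iff] at *
  obtain ⟨C, hC0, hC⟩ := A_bdd M
  refine ((hv.2.add hw.2).const_mul C).mono' ((A_meas M hv.1).inner hw.1) ?_
  filter_upwards [hC] with x hx
  simp only [Pi.add_apply]
  rw [Real.norm_eq_abs]
  refine (hx _ _).trans ?_
  gcongr
  nlinarith [sq_nonneg (‖v x‖ - ‖w x‖), sq_nonneg ‖v x‖, sq_nonneg ‖w x‖]

lemma A_nonneg {Ω : Set (Euc N)} (M : Coeff N Ω) :
    ∀ᵐ x ∂(volume.restrict Ω), ∀ ξ : Euc N, 0 ≤ ⟪M.A x ξ, ξ⟫ := by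
  filter_upwards [M.coer] with x hx ξ
  exact le_trans (by positivity) (hx ξ)

lemma A_cs {Ω : Set (Euc N)} (M : Coeff N Ω) :
    ∀ᵐ x ∂(volume.restrict Ω), ∀ ξ η : Euc N,
      ⟪M.A x ξ, η⟫ ^ 2 ≤ ⟪M.A x ξ, ξ⟫ * ⟪M.A x η, η⟫ := by
  filter_upwards [A_nonneg M] with x hx ξ η
  have h2 : ∀ t : ℝ, 0 ≤ ⟪M.A x ξ, ξ⟫ * (t * t) + (2 * ⟪M.A x ξ, η⟫) * t + ⟪M.A x η, η⟫ := by
    intro t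
    have := hx (t • ξ + η)
    have s : ⟪M.A x η, ξ⟫ = ⟪M.A x ξ, η⟫ := by
      rw [M.symm x η ξ, real_inner_comm]
    simp only [map_add, map_smul, inner_add_left, inner_add_right, real_inner_smul_left,
      real_inner_smul_right, s] at this
    nlinarith
  have h3 := discrim_le_zero h2
  rw [discrim] at h3
  nlinarith

lemma sqA_nonneg {Ω : Set (Euc N)} (M : Coeff N Ω) (v : Euc N → Euc N) : 0 ≤ sqA Ω M.A v := by
  apply integral_nonneg_of_ae
  filter_upwards [A_nonneg M] with x hx
  exact hx _

lemma ipA_cs {Ω : Set (Euc N)} (M : Coeff N Ω) {v w : Euc N → Euc N}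
    (hv : MemL2V Ω 0 v) (hw : MemL2V Ω 0 w) :
    |ipA Ω M.A v w| ≤ nrmA Ω M.A v * nrmA Ω M.A w := by
  have n1 : ∀ v : Euc N → Euc N, ∀ᵐ x ∂(volume.restrict Ω), 0 ≤ ⟪M.A x (v x), v x⟫ := by
    intro v
    filter_upwards [A_nonneg M] with x hx
    exact hx _
  rw [abs_le']
  constructor
  · refine int_cs (ipA_int M hv hv) (ipA_int M hw hw) (n1 v) (n1 w) ?_
    filter_upwards [A_cs M] with x hx
    exact hx _ _
  · rw [ipA, ← integral_neg]
    refine int_cs (ipA_int M hv hv) (ipA_int M hw hw) (n1 v) (n1 w) ?_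
    filter_upwards [A_cs M] with x hx
    rw [neg_sq]
    exact hx _ _

lemma ipA_sub {Ω : Set (Euc N)} (M : Coeff N Ω) {u v w : Euc N → Euc N}
    (hu : MemL2V Ω 0 u) (hv : MemL2V Ω 0 v) (hw : MemL2V Ω 0 w) :
    ipA Ω M.A (fun x => u x - v x) w = ipA Ω M.A u w - ipA Ω M.A v w := by
  rw [ipA, ipA, ipA, ← integral_sub (ipA_int M hu hw) (ipA_int M hv hw)]
  simp only [map_sub, inner_sub_left]

lemma sqA_sub {Ω : Set (Euc N)} (M : Coeff N Ω) {v w : Euc N → Euc N}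
    (hv : MemL2V Ω 0 v) (hw : MemL2V Ω 0 w) :
    sqA Ω M.A (fun x => v x - w x) = sqA Ω M.A v - 2 * ipA Ω M.A v w + sqA Ω M.A w := by
  have c : ∀ {a b : Euc N → Euc N}, ipA Ω M.A a b = ipA Ω M.A b a := by
    intro a b
    unfold ipA
    congr 1
    ext x
    rw [M.symm, real_inner_comm]
  unfold sqA
  rw [ipA_sub M hv hw (memV_sub hv hw), c (a := v), c (a := w), ipA_sub M hv hw hv,
    ipA_sub M hv hw hw, c (a := w) (b := v)]
  ring

lemma sqA_le {Ω : Set (Euc N)} (M : Coeff N Ω) : ∃ C : ℝ, 0 ≤ C ∧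
    ∀ v : Euc N → Euc N, MemL2V Ω 0 v → nrmA Ω M.A v ≤ C * nrmL2V Ω 0 v := by
  obtain ⟨C, hC0, hC⟩ := A_bdd M
  refine ⟨√C, Real.sqrt_nonneg _, fun v hv => ?_⟩
  rw [nrmA, nrmL2V, ← Real.sqrt_mul hC0]
  apply Real.sqrt_le_sqrt
  rw [sqL2V, ← integral_const_mul]
  refine integral_mono_ae (ipA_int M hv hv) (hv.2.const_mul C) ?_
  filter_upwards [hC] with x hx
  simp only [Real.rpow_zero, one_mul, pow_two]
  exact (le_abs_self _).trans (hx _ _)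

lemma test_bound {Ω : Set (Euc N)} (hN : 3 ≤ N) (M : Coeff N Ω) {φ : Euc N → ℝ}
    (h : IsTest Ω φ) : nrmL2 Ω (-1) φ ≤ M.α * cN N * nrmA Ω M.A (gradient φ) := by
  have hN' : (3 : ℝ) ≤ N := by exact_mod_cast hN
  have hc : 0 ≤ cN N := by
    unfold cN; apply div_nonneg <;> linarith
  have hα := M.α_pos
  have g := memV_grad h
  apply Real.sqrt_le_iff.2
  refine ⟨by unfold nrmA; positivity, ?_⟩
  rw [mul_pow, nrmA, Real.sq_sqrt (sqA_nonneg M _)]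
  have e1 : sqL2 Ω (-1) φ = ∫ x, (1 + ‖x‖ ^ 2)⁻¹ * φ x ^ 2 := by
    simp only [sqL2, Real.rpow_neg_one]
    apply setIntegral_eq_integral_of_forall_compl_eq_zero
    intro x hx
    simp [image_eq_zero_of_notMem_tsupport (fun h' => hx (h.2.2 h'))]
  have e2 : ∫ x in Ω, ‖gradient φ x‖ ^ 2 = ∫ x, ‖gradient φ x‖ ^ 2 := by
    apply setIntegral_eq_integral_of_forall_compl_eq_zero
    intro x hx
    simp [grad_zero x (fun h' => hx (h.2.2 h'))]
  have e3 : ∫ x in Ω, ‖gradient φ x‖ ^ 2 ≤ M.α ^ 2 * sqA Ω M.A (gradient φ) := by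
    rw [sqA, ipA, ← integral_const_mul]
    refine integral_mono_ae (memV_iff.1 g).2 ((ipA_int M g g).const_mul _) ?_
    filter_upwards [M.coer] with x hx
    have := mul_le_mul_of_nonneg_left (hx (gradient φ x)) (sq_nonneg M.α)
    rwa [← mul_assoc, ← mul_pow, mul_inv_cancel₀ hα.ne', one_pow, one_mul] at this
  rw [e1]
  refine (hardy hN h).trans ?_
  rw [← e2]
  nlinarith [mul_le_mul_of_nonneg_left e3 (sq_nonneg (cN N))]

end helpers

/-- Combined non-conforming upper bound:
`‖E‖²_A ≤ (c_{N,α}‖f + div v‖ + ‖A⁻¹(ṽ − v)‖_A)² + ‖∇u − A⁻¹ṽ‖²_A`. -/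
theorem stmt_12 (Ω : Set (Euc N)) (hΩ : IsOpen Ω) (hN : 3 ≤ N) (M : Coeff N Ω)
    (f : Euc N → ℝ) (hf : MemL2 Ω 1 f)
    (uh : Euc N → ℝ) (gu : Euc N → Euc N)
    (huh : MemL2 Ω (-1) uh) (hgu : MemL2V Ω 0 gu) (hguw : IsWeakGrad Ω uh gu)
    (hweak : ∀ φ : Euc N → ℝ, IsTest Ω φ →
      (∫ x in Ω, ⟪M.A x (gu x), gradient φ x⟫) = ∫ x in Ω, f x * φ x)
    (vt : Euc N → Euc N) (hvt : MemL2V Ω 0 vt)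
    (wt : Euc N → Euc N) (hwt : IsAInv Ω M.A vt wt) :
    ∀ (v : Euc N → Euc N) (dv : Euc N → ℝ) (w : Euc N → Euc N),
      MemL2V Ω 0 v → MemL2 Ω 1 dv → IsWeakDiv Ω v dv → IsAInv Ω M.A v w →
    ∀ (u : Euc N → ℝ) (gu' : Euc N → Euc N),
      MemL2 Ω (-1) u → MemL2V Ω 0 gu' → IsWeakGrad Ω u gu' →
      MemH10 Ω (fun x => uh x - u x) (fun x => gu x - gu' x) →
      sqA Ω M.A (fun x => gu x - wt x) ≤
        (M.α * cN N * nrmL2 Ω 1 (fun x => f x + dv x) +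
            nrmA Ω M.A (fun x => wt x - w x)) ^ 2 +
          sqA Ω M.A (fun x => gu' x - wt x) := by
  intro v dv w hv hdv hvd hw u gu' hu hgu' _ hH
  obtain ⟨-, hg, -, φ, hφ, -, hlim⟩ := hH
  set F : ℝ := nrmL2 Ω 1 (fun x => f x + dv x) with hF
  set q : ℝ := nrmA Ω M.A (fun x => wt x - w x) with hq
  set a : ℝ := M.α * cN N * F + q with ha
  have hF0 : 0 ≤ F := Real.sqrt_nonneg _
  have hE := memV_sub hgu hwt.1
  have hh := memV_sub hgu' hwt.1
  have key : ∀ n, ipA Ω M.A (fun x => gu x - wt x) (gradient (φ n)) ≤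
      a * nrmA Ω M.A (gradient (φ n)) := by
    intro n
    have hG := memV_grad (hφ n)
    have hT := mem_test (hφ n)
    have e1 := ipA_sub M hgu hwt.1 hG
    have e2 := ipA_sub M hwt.1 hw.1 hG
    have e3 : ipA Ω M.A gu (gradient (φ n)) = ∫ x in Ω, f x * φ n x := hweak _ (hφ n)
    have e4 : ipA Ω M.A w (gradient (φ n)) = - ∫ x in Ω, dv x * φ n x := by
      rw [← hvd _ (hφ n)]
      apply integral_congr_ae
      filter_upwards [hw.2] with x hx
      simp only [hx]
    have e5 : ∫ x in Ω, (f x + dv x) * φ n x =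
        (∫ x in Ω, f x * φ n x) + ∫ x in Ω, dv x * φ n x := by
      rw [← integral_add (prod_int hf hT) (prod_int hdv hT)]
      simp only [add_mul]
    have e6 : ∫ x in Ω, (f x + dv x) * φ n x ≤ F * nrmL2 Ω (-1) (φ n) :=
      prod_cs (mem_add hf hdv) hT
    have e7 := neg_le_of_abs_le (ipA_cs M (memV_sub hwt.1 hw.1) hG)
    have e8 := mul_le_mul_of_nonneg_left (test_bound hN M (hφ n)) hF0
    rw [← hq] at e7
    rw [ha]
    linarith
  obtain ⟨C, hC0, hC⟩ := sqA_le M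
  set δ : ℕ → ℝ := fun n => nrmL2V Ω 0 (fun x => (gu x - gu' x) - gradient (φ n) x) with hδ
  set k := nrmA Ω M.A (fun x => gu' x - wt x) with hk
  have bound : ∀ n, sqA Ω M.A (fun x => gu x - wt x) ≤
      a ^ 2 + sqA Ω M.A (fun x => gu' x - wt x) + 2 * (k * (C * δ n)) + (C * δ n) ^ 2 := by
    intro n
    have hG := memV_grad (hφ n)
    have hy := memV_sub hG hg
    have hy' := memV_sub hg hG
    have s1 := sqA_sub M hE hG
    have s2 := sqA_sub M hh hy
    have e : (fun x => (gu' x - wt x) - (gradient (φ n) x - (gu x - gu' x))) =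
        fun x => (gu x - wt x) - gradient (φ n) x := by
      ext1 x; abel
    rw [e] at s2
    have d1 : nrmA Ω M.A (fun x => gradient (φ n) x - (gu x - gu' x)) ≤ C * δ n := by
      refine (hC _ hy).trans (le_of_eq ?_)
      simp only [hδ, nrmL2V, sqL2V, norm_sub_rev]
    have n0 : 0 ≤ nrmA Ω M.A (fun x => gradient (φ n) x - (gu x - gu' x)) := Real.sqrt_nonneg _
    have d2 : sqA Ω M.A (fun x => gradient (φ n) x - (gu x - gu' x)) ≤ (C * δ n) ^ 2 := by
      rw [← Real.sq_sqrt (sqA_nonneg M _)]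
      exact pow_le_pow_left₀ n0 d1 2
    have d3 := neg_le_of_abs_le (ipA_cs M hh hy)
    have k0 : 0 ≤ k := Real.sqrt_nonneg _
    have d4 := mul_le_mul_of_nonneg_left d1 k0
    have d5 : sqA Ω M.A (gradient (φ n)) = nrmA Ω M.A (gradient (φ n)) ^ 2 :=
      (Real.sq_sqrt (sqA_nonneg M _)).symm
    have := key n
    nlinarith [sq_nonneg (a - nrmA Ω M.A (gradient (φ n)))]
  have t1 : Tendsto (fun n => C * δ n) atTop (𝓝 0) := by
    simpa using hlim.const_mul C
  have t2 : Tendsto (fun n => a ^ 2 + sqA Ω M.A (fun x => gu' x - wt x) +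
      2 * (k * (C * δ n)) + (C * δ n) ^ 2) atTop
      (𝓝 (a ^ 2 + sqA Ω M.A (fun x => gu' x - wt x))) := by
    have := (((t1.const_mul k).const_mul 2).const_add
      (a ^ 2 + sqA Ω M.A (fun x => gu' x - wt x))).add (t1.pow 2)
    simpa using this
  exact ge_of_tendsto' t2 bound
end
end

section
/- Overestimation of the non-conforming majorant by at most a factor 2: let ṽ ∈ L²(Ω;ℝ^N) and E := ∇û − A^{−1}ṽ. The field v̂ := A∇û has weak divergence −f ∈ L²₊₁(Ω) and satisfies M₊(A^{−1}ṽ, v̂) = c_{N,α}‖f + div v̂‖_{L²₊₁(Ω)} + ‖A^{−1}(ṽ − v̂)‖_A = ‖E‖_A, and the choice u = û (which satisfies û − u = 0 ∈ H¹°₋₁(Ω)) gives M̃₊(A^{−1}ṽ, ∇û) = ‖∇û − A^{−1}ṽ‖_A = ‖E‖_A; consequently the combined majorant 𝓜₊(ṽ) := inf_v M₊² + inf_u M̃₊² satisfies 𝓜₊(ṽ) ≤ 2‖E‖²_A. -/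
open MeasureTheory Filter Topology
open scoped RealInnerProductSpace

noncomputable section

variable {N : ℕ}

theorem aux_meas (Ω : Set (Euc N)) (M : Coeff N Ω) (g : Euc N → Euc N)
    (hg : AEStronglyMeasurable g (volume.restrict Ω)) :
    AEStronglyMeasurable (fun x => M.A x (g x)) (volume.restrict Ω) := by
  have h : (fun x => M.A x (g x)) =
      fun x => ∑ i : Fin N, (g x i) • M.A x (EuclideanSpace.basisFun (Fin N) ℝ i) := by
    funext x
    conv_lhs => rw [← (EuclideanSpace.basisFun (Fin N) ℝ).sum_repr (g x)]
    rw [map_sum]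
    refine Finset.sum_congr rfl fun i _ => ?_
    rw [map_smul]
    rfl
  rw [h]
  refine Finset.aestronglyMeasurable_fun_sum _ fun i _ => ?_
  have hc : Continuous fun y : Euc N => y i := by fun_prop
  have hgi : AEStronglyMeasurable (fun x => g x i) (volume.restrict Ω) :=
    hc.comp_aestronglyMeasurable hg
  exact hgi.smul (M.meas _)

theorem aux_mem (Ω : Set (Euc N)) (M : Coeff N Ω) (g : Euc N → Euc N)
    (hg : MemL2V Ω 0 g) : MemL2V Ω 0 (fun x => M.A x (g x)) := by
  have hm := aux_meas Ω M g hg.1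
  refine ⟨hm, ?_⟩
  obtain ⟨C, hC⟩ := M.bdd
  have hi := hg.2
  simp only [Real.rpow_zero, one_mul] at hi ⊢
  refine Integrable.mono' (hi.const_mul (C ^ 2)) (hm.norm.pow 2) ?_
  filter_upwards [hC] with x hx
  rw [Real.norm_of_nonneg (by positivity), ← mul_pow]
  exact pow_le_pow_left₀ (norm_nonneg _) (hx _) 2

theorem aux_nonneg (Ω : Set (Euc N)) (M : Coeff N Ω) (g : Euc N → Euc N) :
    0 ≤ sqA Ω M.A g := by
  unfold sqA ipA
  refine integral_nonneg_of_ae ?_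
  filter_upwards [M.coer] with x hx
  exact le_trans (by positivity) (hx (g x))

theorem aux_eq (Ω : Set (Euc N)) (M : Coeff N Ω) (f : Euc N → ℝ) (gu wt w : Euc N → Euc N)
    (hw : IsAInv Ω M.A (fun x => M.A x (gu x)) w) :
    M.α * cN N * nrmL2 Ω 1 (fun x => f x + - f x) + nrmA Ω M.A (fun x => wt x - w x) =
        nrmA Ω M.A (fun x => gu x - wt x) := by
  have h0 : nrmL2 Ω 1 (fun x => f x + - f x) = 0 := by
    simp [nrmL2, sqL2]
  rw [h0, mul_zero, zero_add]
  unfold nrmA sqA ipA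
  congr 1
  refine integral_congr_ae ?_
  filter_upwards [hw.2, M.coer] with x hx hc
  have h1 : w x = gu x := by
    have h2 := hc (w x - gu x)
    rw [map_sub, hx, sub_self, inner_zero_left] at h2
    have hα : 0 < M.α⁻¹ ^ 2 := by have := M.α_pos; positivity
    have h3 : ‖w x - gu x‖ ^ 2 ≤ 0 := by
      by_contra hcon
      push Not at hcon
      exact absurd (mul_pos hα hcon) (not_lt.mpr h2)
    have h4 : ‖w x - gu x‖ = 0 := by
      have := norm_nonneg (w x - gu x)
      nlinarith
    exact sub_eq_zero.mp (norm_eq_zero.mp h4)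
  rw [h1, ← neg_sub (gu x) (wt x), map_neg, inner_neg_neg]

theorem aux_H10 (Ω : Set (Euc N)) (u : Euc N → ℝ) (g : Euc N → Euc N) :
    MemH10 Ω (fun x => u x - u x) (fun x => g x - g x) := by
  have hgr : ∀ x : Euc N, gradient (fun _ : Euc N => (0:ℝ)) x = 0 := by
    intro x
    simp [gradient]
  simp only [sub_self]
  refine ⟨⟨aestronglyMeasurable_const, by simp⟩, ⟨aestronglyMeasurable_const, by simp⟩,
    fun φ _ => by simp, fun _ _ => 0, fun n => ⟨contDiff_const, ?_, ?_⟩, ?_, ?_⟩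
  · exact HasCompactSupport.zero
  · have : tsupport (fun _ : Euc N => (0:ℝ)) = ∅ := by
      simp [tsupport, Function.support_fun_zero]
    rw [this]; exact Set.empty_subset _
  · simp [nrmL2, sqL2]
  · simp [nrmL2V, sqL2V, hgr]

/-- Overestimation of the combined non-conforming majorant by at most the factor 2:
`v̂ = A∇û` and `u = û` make both parts equal to `‖E‖_A`, hence `𝓜₊(ṽ) ≤ 2‖E‖²_A`. -/
theorem stmt_16 (Ω : Set (Euc N)) (hΩ : IsOpen Ω) (hN : 3 ≤ N) (M : Coeff N Ω)
    (f : Euc N → ℝ) (hf : MemL2 Ω 1 f)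
    (uh : Euc N → ℝ) (gu : Euc N → Euc N)
    (huh : MemL2 Ω (-1) uh) (hgu : MemL2V Ω 0 gu) (hguw : IsWeakGrad Ω uh gu)
    (hweak : ∀ φ : Euc N → ℝ, IsTest Ω φ →
      (∫ x in Ω, ⟪M.A x (gu x), gradient φ x⟫) = ∫ x in Ω, f x * φ x)
    (vt : Euc N → Euc N) (hvt : MemL2V Ω 0 vt)
    (wt : Euc N → Euc N) (hwt : IsAInv Ω M.A vt wt) :
    MemL2V Ω 0 (fun x => M.A x (gu x)) ∧
    IsWeakDiv Ω (fun x => M.A x (gu x)) (fun x => - f x) ∧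
    MemL2 Ω 1 (fun x => - f x) ∧
    (∀ w : Euc N → Euc N, IsAInv Ω M.A (fun x => M.A x (gu x)) w →
      M.α * cN N * nrmL2 Ω 1 (fun x => f x + - f x) + nrmA Ω M.A (fun x => wt x - w x) =
        nrmA Ω M.A (fun x => gu x - wt x)) ∧
    MemH10 Ω (fun x => uh x - uh x) (fun x => gu x - gu x) ∧
    sInf {r : ℝ | ∃ (v : Euc N → Euc N) (dv : Euc N → ℝ) (w : Euc N → Euc N),
        MemL2V Ω 0 v ∧ MemL2 Ω 1 dv ∧ IsWeakDiv Ω v dv ∧ IsAInv Ω M.A v w ∧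
        r = (M.α * cN N * nrmL2 Ω 1 (fun x => f x + dv x) +
          nrmA Ω M.A (fun x => wt x - w x)) ^ 2} +
      sInf {r : ℝ | ∃ (u : Euc N → ℝ) (gu' : Euc N → Euc N),
        MemL2 Ω (-1) u ∧ MemL2V Ω 0 gu' ∧ IsWeakGrad Ω u gu' ∧
        MemH10 Ω (fun x => uh x - u x) (fun x => gu x - gu' x) ∧
        r = nrmA Ω M.A (fun x => gu' x - wt x) ^ 2} ≤
      2 * sqA Ω M.A (fun x => gu x - wt x) := by
  have hAm := aux_mem Ω M gu hgu
  have hdiv : IsWeakDiv Ω (fun x => M.A x (gu x)) (fun x => - f x) := by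
    intro φ hφ
    rw [hweak φ hφ, ← integral_neg]
    simp
  have hnf : MemL2 Ω 1 (fun x => - f x) := ⟨hf.1.neg, by simpa using hf.2⟩
  have hH := aux_H10 Ω uh gu
  refine ⟨hAm, hdiv, hnf, fun w hw => aux_eq Ω M f gu wt w hw, hH, ?_⟩
  have hsq : nrmA Ω M.A (fun x => gu x - wt x) ^ 2 = sqA Ω M.A (fun x => gu x - wt x) :=
    Real.sq_sqrt (aux_nonneg Ω M _)
  have hinv : IsAInv Ω M.A (fun x => M.A x (gu x)) gu :=
    ⟨hgu, Filter.Eventually.of_forall fun _ => rfl⟩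
  rw [two_mul]
  refine add_le_add (csInf_le ⟨0, ?_⟩ ?_) (csInf_le ⟨0, ?_⟩ ?_)
  · rintro r ⟨v, dv, w, -, -, -, -, rfl⟩
    positivity
  · refine ⟨_, _, gu, hAm, hnf, hdiv, hinv, ?_⟩
    rw [aux_eq Ω M f gu wt gu hinv, hsq]
  · rintro r ⟨u, g, -, -, -, -, rfl⟩
    positivity
  · exact ⟨uh, gu, huh, hgu, hguw, hH, hsq.symm⟩
end
end
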